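/- arXiv:1410.2906 — 5 statements merged into one kernel-verified Lean document; each statement's English description precedes it below -/
import Mathlib

section
/- Let (X, d_X) and (Y, d_Y) be nonempty compact metric spaces. Let (ε_n) be a sequence of positive reals with ε_n → 0, let A_n ⊆ X and B_n ⊆ Y be nonempty ε_n-nets, and let H_n : A_n → B_n be bijections whose distortions (measured with respect to the ambient distances d_X and d_Y) satisfy dis H_n → 0. Then there exist a strictly increasing sequence of indices (n_k) and a distance-preserving bijection H : X → Y such that sup_{p ∈ A_{n_k}} d_Y(H_{n_k}(p), H(p)) → 0 and sup_{q ∈ B_{n_k}} d_X(H_{n_k}^{-1}(q), H^{-1}(q)) → 0 as k → ∞. -/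
open Filter Topology

/-- Compact metric limit of almost-isometric bijections between nets:
existence of a subsequence and a distance-preserving bijection approximating them. -/
theorem limit_isometry_of_net_bijections
    {X Y : Type*} [MetricSpace X] [CompactSpace X] [Nonempty X]
    [MetricSpace Y] [CompactSpace Y] [Nonempty Y]
    (ε : ℕ → ℝ) (hεpos : ∀ n, 0 < ε n) (hε : Tendsto ε atTop (𝓝 0))
    (A : ℕ → Set X) (B : ℕ → Set Y)
    (hA : ∀ n, (A n).Nonempty) (hB : ∀ n, (B n).Nonempty)
    (hAnet : ∀ n (x : X), ∃ a ∈ A n, dist x a ≤ ε n)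
    (hBnet : ∀ n (y : Y), ∃ b ∈ B n, dist y b ≤ ε n)
    (T : ∀ n, A n → B n) (hT : ∀ n, Function.Bijective (T n))
    (δ : ℕ → ℝ) (hδ : Tendsto δ atTop (𝓝 0))
    (hdis : ∀ n (x y : A n),
      |dist (x : X) (y : X) - dist (↑(T n x) : Y) (↑(T n y) : Y)| ≤ δ n) :
    ∃ φ : ℕ → ℕ, StrictMono φ ∧
      ∃ H : X ≃ Y, (∀ x y : X, dist (H x) (H y) = dist x y) ∧
        (∀ η > (0 : ℝ), ∃ N, ∀ k ≥ N, ∀ p : A (φ k),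
          dist (↑(T (φ k) p) : Y) (H (p : X)) ≤ η) ∧
        (∀ η > (0 : ℝ), ∃ N, ∀ k ≥ N, ∀ p : A (φ k),
          dist (p : X) (H.symm (↑(T (φ k) p) : Y)) ≤ η) := by
  classical
  choose a haA had using hAnet
  set F : ℕ → X → Y := fun n x => (T n ⟨a n x, haA n x⟩ : Y) with hF
  set U : Ultrafilter ℕ := hyperfilter ℕ with hU
  have hUle : (U : Filter ℕ) ≤ atTop := by
    rw [← Nat.cofinite_eq_atTop]; exact hyperfilter_le_cofinite
  have hεU : Tendsto ε U (𝓝 0) := hε.mono_left hUle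
  have hδU : Tendsto δ U (𝓝 0) := hδ.mono_left hUle
  have hFd : ∀ n x y, |dist (F n x) (F n y) - dist x y| ≤ δ n + 2 * ε n := by
    intro n x y
    have h1 := abs_le.1 (hdis n ⟨a n x, haA n x⟩ ⟨a n y, haA n y⟩)
    have h2 := had n x
    have h3 := had n y
    have h4 := dist_triangle4 x (a n x) (a n y) y
    have h5 := dist_triangle4 (a n x) x y (a n y)
    rw [dist_comm (a n y) y] at h4
    rw [dist_comm (a n x) x] at h5
    simp only [hF]
    rw [abs_le]
    constructor <;> linarith [h1.1, h1.2]
  have hlim : ∀ x, ∃ y, Tendsto (fun n => F n x) U (𝓝 y) := by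
    intro x
    obtain ⟨y, -, hy⟩ := isCompact_univ.ultrafilter_le_nhds (U.map (fun n => F n x)) (by simp)
    exact ⟨y, hy⟩
  choose H hH using hlim
  have hsum : Tendsto (fun n => δ n + 2 * ε n) U (𝓝 0) := by
    simpa using hδU.add (hεU.const_mul 2)
  have hiso : ∀ x y, dist (H x) (H y) = dist x y := by
    intro x y
    have h1 : Tendsto (fun n => dist (F n x) (F n y)) U (𝓝 (dist (H x) (H y))) :=
      (hH x).dist (hH y)
    have h2 : Tendsto (fun n => dist (F n x) (F n y) - dist x y) U (𝓝 0) :=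
      squeeze_zero_norm (fun n => hFd n x y) hsum
    have h3 := h2.add_const (dist x y)
    simp only [sub_add_cancel, zero_add] at h3
    exact tendsto_nhds_unique h1 h3
  have hunif : ∀ η > (0 : ℝ), ∀ᶠ n in (U : Filter ℕ), ∀ p : A n,
      dist (T n p : Y) (H (p : X)) ≤ η := by
    intro η hη
    obtain ⟨t, -, htf, htc⟩ := (isCompact_univ (X := X)).finite_cover_balls
      (show 0 < η / 8 by positivity)
    have e1 : ∀ᶠ n in (U : Filter ℕ), ∀ c ∈ t, dist (F n c) (H c) < η / 8 :=
      (eventually_all_finite htf).2 fun c _ =>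
        (Metric.tendsto_nhds.1 (hH c)) _ (by positivity)
    have e2 := hδU.eventually_lt_const (show (0 : ℝ) < η / 8 by positivity)
    have e3 := hεU.eventually_lt_const (show (0 : ℝ) < η / 8 by positivity)
    filter_upwards [e1, e2, e3] with n h1 h2 h3 p
    obtain ⟨c, hc, hpc⟩ := Set.mem_iUnion₂.1 (htc (Set.mem_univ (p : X)))
    rw [Metric.mem_ball] at hpc
    have k1 := abs_le.1 (hdis n p ⟨a n c, haA n c⟩)
    have k2 : dist (T n p : Y) (H p) ≤ dist (T n p : Y) (F n c) + dist (F n c) (H c)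
      + dist (H c) (H p) := dist_triangle4 _ _ _ _
    have k3 := hiso c p
    rw [dist_comm c] at k3
    have k4 := had n c
    have k5 := dist_triangle (p : X) c (a n c)
    have k6 := h1 c hc
    simp only [hF] at k2 k6
    linarith [k1.1]
  have hisom : Isometry H := Isometry.of_dist_eq hiso
  have hsurj : Function.Surjective H := by
    intro y
    have hcl : IsClosed (Set.range H) := (isCompact_range hisom.continuous).isClosed
    rw [← Set.mem_range, ← hcl.closure_eq, Metric.mem_closure_range_iff]
    intro η hη
    obtain ⟨n, h1, h2⟩ := ((hunif (η / 3) (by positivity)).and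
      (hεU.eventually_lt_const (show (0 : ℝ) < η / 3 by positivity))).exists
    obtain ⟨b, hb, hyb⟩ := hBnet n y
    obtain ⟨p, hp⟩ := (hT n).2 ⟨b, hb⟩
    have h3 := h1 p
    rw [hp] at h3
    refine ⟨p, ?_⟩
    have := dist_triangle y b (H p)
    simp only at h3
    linarith
  obtain ⟨φ, hφ, hφP⟩ := extraction_forall_of_frequently
    (P := fun m n => ∀ p : A n, dist (T n p : Y) (H (p : X)) ≤ 1 / ((m : ℝ) + 1))
    (fun m => (hunif _ Nat.one_div_pos_of_nat).frequently.filter_mono hUle)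
  have key : ∀ η > (0 : ℝ), ∃ N, ∀ k ≥ N, ∀ p : A (φ k),
      dist (T (φ k) p : Y) (H (p : X)) ≤ η := by
    intro η hη
    obtain ⟨N, hN⟩ := exists_nat_one_div_lt hη
    exact ⟨N, fun k hk p => (hφP k p).trans ((Nat.one_div_le_one_div hk).trans hN.le)⟩
  refine ⟨φ, hφ, Equiv.ofBijective H ⟨hisom.injective, hsurj⟩, hiso, key, ?_⟩
  intro η hη
  obtain ⟨N, hN⟩ := key η hη
  refine ⟨N, fun k hk p => ?_⟩
  rw [← hiso, dist_comm]
  have : H ((Equiv.ofBijective H ⟨hisom.injective, hsurj⟩).symm (T (φ k) p : Y)) = T (φ k) p :=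
    (Equiv.ofBijective H ⟨hisom.injective, hsurj⟩).apply_symm_apply (T (φ k) p : Y)
  rw [this]
  exact hN k hk p
end

section
/- Let (X, d_X) and (Y, d_Y) be nonempty compact metric spaces. Suppose that for every n there exist a positive real ε_n with ε_n → 0, nonempty ε_n-nets A_n ⊆ X and B_n ⊆ Y, and a bijection H_n : A_n → B_n with dis H_n → 0 (distortion with respect to the ambient distances). Then X and Y are isometric: there exists a distance-preserving bijection H : X → Y. -/
open Filter Topology

/-- Two compact metric spaces admitting bijections between ε_n-nets
with vanishing distortion (ε_n → 0) are isometric. -/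
theorem isometric_of_net_bijections
    {X Y : Type*} [MetricSpace X] [CompactSpace X] [Nonempty X]
    [MetricSpace Y] [CompactSpace Y] [Nonempty Y]
    (ε : ℕ → ℝ) (hεpos : ∀ n, 0 < ε n) (hε : Tendsto ε atTop (𝓝 0))
    (A : ℕ → Set X) (B : ℕ → Set Y)
    (hA : ∀ n, (A n).Nonempty) (hB : ∀ n, (B n).Nonempty)
    (hAnet : ∀ n (x : X), ∃ a ∈ A n, dist x a ≤ ε n)
    (hBnet : ∀ n (y : Y), ∃ b ∈ B n, dist y b ≤ ε n)
    (T : ∀ n, A n → B n) (hT : ∀ n, Function.Bijective (T n))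
    (δ : ℕ → ℝ) (hδ : Tendsto δ atTop (𝓝 0))
    (hdis : ∀ n (x y : A n),
      |dist (x : X) (y : X) - dist (↑(T n x) : Y) (↑(T n y) : Y)| ≤ δ n) :
    ∃ H : X ≃ Y, ∀ x y : X, dist (H x) (H y) = dist x y := by
  have key : ∀ n, GromovHausdorff.ghDist X Y ≤ ε n + δ n / 2 + ε n := fun n =>
    GromovHausdorff.ghDist_le_of_approx_subsets (fun a : A n => ((T n a : B n) : Y))
      (hAnet n)
      (fun y => by
        obtain ⟨b, hb, h⟩ := hBnet n y
        obtain ⟨a, ha⟩ := (hT n).2 ⟨b, hb⟩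
        exact ⟨a, by simpa [ha] using h⟩)
      (fun x y => hdis n x y)
  have lim : Tendsto (fun n => ε n + δ n / 2 + ε n) atTop (𝓝 0) := by
    simpa using (hε.add (hδ.div_const 2)).add hε
  have h0 : GromovHausdorff.ghDist X Y ≤ 0 := ge_of_tendsto' lim key
  have h1 : GromovHausdorff.toGHSpace X = GromovHausdorff.toGHSpace Y :=
    dist_le_zero.1 h0
  obtain ⟨e⟩ := GromovHausdorff.toGHSpace_eq_toGHSpace_iff_isometryEquiv.1 h1
  exact ⟨e.toEquiv, fun x y => e.isometry.dist_eq x y⟩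
end

section
/- Let d ≥ 1, let A be a real d × d matrix with det A > 0, and let Q ∈ SO(d) be a special orthogonal matrix. Then |det A − 1| ≤ (‖A − Q‖ + 1)^d − 1, where ‖·‖ denotes the operator norm with respect to the Euclidean norm on ℝ^d. In particular |det A − 1| ≤ (dist(A, SO(d)) + 1)^d − 1, where dist(A, SO(d)) = inf_{Q ∈ SO(d)} ‖A − Q‖. -/
open Matrix

/-- The operator norm of a real `d × d` matrix, acting on Euclidean `ℝ^d`. -/
noncomputable def matrixOpNorm {d : ℕ} (M : Matrix (Fin d) (Fin d) ℝ) : ℝ :=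
  ‖Matrix.toEuclideanCLM (𝕜 := ℝ) M‖

/-- The distance (in operator norm) from a matrix to the special orthogonal group `SO(d)`. -/
noncomputable def distToSO {d : ℕ} (A : Matrix (Fin d) (Fin d) ℝ) : ℝ :=
  sInf {r : ℝ | ∃ Q : Matrix (Fin d) (Fin d) ℝ,
    Qᵀ * Q = 1 ∧ Q.det = 1 ∧ r = matrixOpNorm (A - Q)}

lemma aux_prod {ι : Type*} (s : Finset ι) (f : ι → ℝ) (δ : ℝ) (hδ : 0 ≤ δ)
    (h : ∀ i ∈ s, |f i - 1| ≤ δ) : |∏ i ∈ s, f i - 1| ≤ (δ + 1) ^ s.card - 1 := by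
  classical
  induction s using Finset.induction_on with
  | empty => simp
  | insert a s ha ih =>
    have ih' := ih (fun i hi => h i (Finset.mem_insert_of_mem hi))
    have h1 := h a (Finset.mem_insert_self a s)
    rw [Finset.prod_insert ha, Finset.card_insert_of_notMem ha, pow_succ]
    set P := ∏ i ∈ s, f i
    have e : f a * P - 1 = f a * (P - 1) + (f a - 1) := by ring
    have h2 : |f a| ≤ δ + 1 := by
      rw [abs_le] at h1 ⊢
      constructor <;> linarith
    have h3 : |f a| * |P - 1| ≤ (δ + 1) * ((δ + 1) ^ s.card - 1) :=
      mul_le_mul h2 ih' (abs_nonneg _) (by linarith)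
    calc |f a * P - 1| ≤ |f a * (P - 1)| + |f a - 1| := by rw [e]; exact abs_add_le _ _
      _ ≤ _ := by rw [abs_mul]; linarith

lemma aux_norm_sq {d : ℕ} (A : Matrix (Fin d) (Fin d) ℝ) (v : EuclideanSpace ℝ (Fin d)) :
    ‖Matrix.toEuclideanCLM (𝕜 := ℝ) A v‖ ^ 2 =
      inner ℝ (Matrix.toEuclideanCLM (𝕜 := ℝ) (Aᵀ * A) v) v := by
  have : Aᵀ = star A := by
    rw [Matrix.star_eq_conjTranspose, Matrix.conjTranspose_eq_transpose_of_trivial]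
  rw [this, map_mul, map_star, ContinuousLinearMap.star_eq_adjoint,
    ContinuousLinearMap.mul_apply, ContinuousLinearMap.adjoint_inner_left,
    real_inner_self_eq_norm_sq]

lemma aux_main {d : ℕ} (A Q : Matrix (Fin d) (Fin d) ℝ) (hdet : 0 < A.det)
    (hQorth : Qᵀ * Q = 1) : |A.det - 1| ≤ (matrixOpNorm (A - Q) + 1) ^ d - 1 := by
  have hH : (Aᵀ * A).IsHermitian := by
    have := Matrix.isHermitian_conjTranspose_mul_self A
    rwa [Matrix.conjTranspose_eq_transpose_of_trivial] at this
  let v := hH.eigenvectorBasis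
  let L := Matrix.toEuclideanCLM (𝕜 := ℝ) (n := Fin d)
  have hv : ∀ i, ‖v i‖ = 1 := fun i => v.orthonormal.1 i
  have h1 : ∀ i, ‖L A (v i)‖ ^ 2 = hH.eigenvalues i := by
    intro i
    have : L (Aᵀ * A) (v i) = hH.eigenvalues i • v i := by
      ext j
      have := congrFun (hH.mulVec_eigenvectorBasis i) j
      simpa [L, v] using this
    rw [aux_norm_sq]
    change inner ℝ (L (Aᵀ * A) (v i)) (v i) = _
    rw [this, real_inner_smul_left, real_inner_self_eq_norm_sq, hv]
    simp
  have h2 : ∀ i, ‖L Q (v i)‖ = 1 := by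
    intro i
    have h : ‖L Q (v i)‖ ^ 2 = 1 := by
      rw [aux_norm_sq, hQorth, map_one, ContinuousLinearMap.one_apply,
        real_inner_self_eq_norm_sq, hv]
      simp
    nlinarith [norm_nonneg (L Q (v i))]
  have h3 : ∀ i, |‖L A (v i)‖ - 1| ≤ matrixOpNorm (A - Q) := by
    intro i
    rw [← h2 i]
    refine (abs_norm_sub_norm_le _ _).trans ?_
    have := (L (A - Q)).le_opNorm (v i)
    rw [hv, mul_one, map_sub, ContinuousLinearMap.sub_apply] at this
    simpa [matrixOpNorm, L] using this
  have h4 : A.det = ∏ i, ‖L A (v i)‖ := by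
    have h := hH.det_eq_prod_eigenvalues
    rw [Matrix.det_mul, Matrix.det_transpose] at h
    simp only [← h1, RCLike.ofReal_real_eq_id, id, Finset.prod_pow] at h
    rw [← pow_two] at h
    exact (pow_left_inj₀ hdet.le (Finset.prod_nonneg fun i _ => norm_nonneg _) two_ne_zero).1 h
  rw [h4]
  simpa using aux_prod Finset.univ (fun i => ‖L A (v i)‖) (matrixOpNorm (A - Q)) (norm_nonneg _) (fun i _ => h3 i)

/-- second part of the geometric Hadamard inequality.
If `det A > 0` and `Q ∈ SO(d)`, then `|det A − 1| ≤ (‖A − Q‖ + 1)^d − 1`; in particular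
`|det A − 1| ≤ (dist(A, SO(d)) + 1)^d − 1`. -/
theorem abs_det_sub_one_le_of_dist_SO
    (d : ℕ) (hd : 1 ≤ d)
    (A Q : Matrix (Fin d) (Fin d) ℝ)
    (hdet : 0 < A.det)
    (hQorth : Qᵀ * Q = 1) (hQdet : Q.det = 1) :
    |A.det - 1| ≤ (matrixOpNorm (A - Q) + 1) ^ d - 1 ∧
    |A.det - 1| ≤ (distToSO A + 1) ^ d - 1 := by
  refine ⟨aux_main A Q hdet hQorth, ?_⟩
  have hd0 : (d : ℝ) ≠ 0 := by positivity
  set c := |A.det - 1| + 1 with hc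
  have hc0 : 0 ≤ c := by positivity
  have key : c ^ ((d : ℝ)⁻¹) - 1 ≤ distToSO A := by
    refine le_csInf ⟨_, Q, hQorth, hQdet, rfl⟩ ?_
    rintro r ⟨R, hR, -, rfl⟩
    have h := aux_main A R hdet hR
    have hn : 0 ≤ matrixOpNorm (A - R) := norm_nonneg _
    have : c ^ ((d : ℝ)⁻¹) ≤ matrixOpNorm (A - R) + 1 := by
      rw [Real.rpow_inv_le_iff_of_pos hc0 (by linarith) (by positivity), Real.rpow_natCast]
      linarith
    linarith
  have h5 : (c ^ ((d : ℝ)⁻¹)) ^ d ≤ (distToSO A + 1) ^ d :=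
    pow_le_pow_left₀ (by positivity) (by linarith) d
  rw [Real.rpow_inv_natCast_pow hc0 (by omega)] at h5
  linarith
end

section
/- Let d ≥ 1, let 0 ≤ ε < 1, and let D and E be real d × d matrices such that there exist Q_D, Q_E ∈ O(d) with ‖D − Q_D‖ ≤ ε and ‖E − Q_E‖ ≤ ε (operator norm). Then E is invertible and there exists S ∈ O(d) with ‖D E^{-1} − S‖ ≤ 2ε/(1 − ε); that is, dist(D E^{-1}, O(d)) ≤ 2ε/(1 − ε). -/
open Matrix

open scoped Matrix.Norms.L2Operator

/-- If `D` and `E` are each within operator-norm distance `ε < 1` of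
orthogonal matrices, then `E` is invertible and `D * E⁻¹` is within `2ε/(1 − ε)` of an
orthogonal matrix. -/
theorem transition_matrix_close_to_orthogonal
    (d : ℕ) (hd : 1 ≤ d)
    (ε : ℝ) (hε0 : 0 ≤ ε) (hε1 : ε < 1)
    (D E QD QE : Matrix (Fin d) (Fin d) ℝ)
    (hQD : QDᵀ * QD = 1) (hQE : QEᵀ * QE = 1)
    (hD : matrixOpNorm (D - QD) ≤ ε)
    (hE : matrixOpNorm (E - QE) ≤ ε) :
    IsUnit E ∧ ∃ S : Matrix (Fin d) (Fin d) ℝ, Sᵀ * S = 1 ∧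
      matrixOpNorm (D * E⁻¹ - S) ≤ 2 * ε / (1 - ε) := by
  have hn : ∀ M : Matrix (Fin d) (Fin d) ℝ, matrixOpNorm M = ‖M‖ := fun M => rfl
  simp only [hn] at *
  haveI : Nonempty (Fin d) := ⟨⟨0, hd⟩⟩
  haveI : CompleteSpace (Matrix (Fin d) (Fin d) ℝ) := FiniteDimensional.complete ℝ _
  have hQE' : QE * QEᵀ = 1 := mul_eq_one_comm.mp hQE
  have uE : QE ∈ unitary (Matrix (Fin d) (Fin d) ℝ) := by
    rw [Unitary.mem_iff, star_eq_conjTranspose, conjTranspose_eq_transpose_of_trivial]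
    exact ⟨hQE, hQE'⟩
  have uE' : QEᵀ ∈ unitary (Matrix (Fin d) (Fin d) ℝ) := by
    have := Unitary.star_mem uE
    rwa [star_eq_conjTranspose, conjTranspose_eq_transpose_of_trivial] at this
  have uD : QD ∈ unitary (Matrix (Fin d) (Fin d) ℝ) := by
    rw [Unitary.mem_iff, star_eq_conjTranspose, conjTranspose_eq_transpose_of_trivial]
    exact ⟨hQD, mul_eq_one_comm.mp hQD⟩
  have uS : QD * QEᵀ ∈ unitary (Matrix (Fin d) (Fin d) ℝ) := mul_mem uD uE'
  have hU : IsUnit E := by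
    have h1 : ‖QEᵀ * (QE - E)‖ < 1 := by
      rw [CStarRing.norm_mem_unitary_mul _ uE', norm_sub_rev]
      linarith
    have h2 := isUnit_one_sub_of_norm_lt_one h1
    have h3 : E = QE * (1 - QEᵀ * (QE - E)) := by
      rw [mul_sub, ← mul_assoc, hQE']; simp
    rw [h3]
    exact (IsUnit.of_mul_eq_one _ hQE').mul h2
  refine ⟨hU, QD * QEᵀ, ?_, ?_⟩
  · rw [transpose_mul, transpose_transpose, mul_assoc, ← mul_assoc QDᵀ, hQD, one_mul, hQE']
  have hX : E * E⁻¹ = 1 := mul_nonsing_inv _ ((isUnit_iff_isUnit_det _).mp hU)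
  have hpos : 0 < 1 - ε := by linarith
  have hXn : ‖E⁻¹‖ ≤ 1 / (1 - ε) := by
    have h1 : QE * E⁻¹ = 1 - (E - QE) * E⁻¹ := by rw [sub_mul, hX]; abel
    have h2 : ‖E⁻¹‖ ≤ 1 + ε * ‖E⁻¹‖ := by
      calc ‖E⁻¹‖ = ‖QE * E⁻¹‖ := (CStarRing.norm_mem_unitary_mul _ uE).symm
        _ = ‖1 - (E - QE) * E⁻¹‖ := by rw [h1]
        _ ≤ ‖(1 : Matrix (Fin d) (Fin d) ℝ)‖ + ‖(E - QE) * E⁻¹‖ := norm_sub_le _ _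
        _ ≤ 1 + ε * ‖E⁻¹‖ := by
          rw [CStarRing.norm_one]
          gcongr
          exact (norm_mul_le _ _).trans (by gcongr)
    rw [le_div_iff₀ hpos]; linarith
  have h4 : D * E⁻¹ - QD * QEᵀ = ((D - QD) - QD * QEᵀ * (E - QE)) * E⁻¹ := by
    have : (D - QD) - QD * QEᵀ * (E - QE) = D - QD * QEᵀ * E := by
      rw [mul_sub, mul_assoc QD QEᵀ QE, hQE, mul_one]; abel
    rw [this, sub_mul, mul_assoc _ E, hX, mul_one]
  have h5 : ‖(D - QD) - QD * QEᵀ * (E - QE)‖ ≤ 2 * ε := by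
    refine (norm_sub_le _ _).trans ?_
    rw [CStarRing.norm_mem_unitary_mul _ uS]
    linarith
  rw [h4]
  calc _ ≤ _ := norm_mul_le _ _
    _ ≤ 2 * ε * (1 / (1 - ε)) := by gcongr
    _ = _ := by ring
end

section
/- Let α, β, δ > 0 and set R = αβ/δ. Define S' : ℝ² → ℝ² by S'(x, y) = (x·cos(yδ/(αβ)), x·sin(yδ/(αβ))). Then for every (x, y) with R ≤ x ≤ R + β and 0 ≤ y ≤ α, the Euclidean distance satisfies ‖S'(x, y) − (x, y)‖ ≤ (α + δ)δ/(2β) + δ + (α + δ)δ²/(6β²). -/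
/-- Quantitative estimate for the map `S'(x,y) =
(x cos(yδ/(αβ)), x sin(yδ/(αβ)))` sending the rectangle
`[αβ/δ, αβ/δ + β] × [0, α]` onto an annulus sector: every point moves by at most
`(α + δ)δ/(2β) + δ + (α + δ)δ²/(6β²)`. -/
theorem annulus_sector_map_displacement_bound
    (α β δ : ℝ) (hα : 0 < α) (hβ : 0 < β) (hδ : 0 < δ)
    (R : ℝ) (hR : R = α * β / δ)
    (x y : ℝ) (hx1 : R ≤ x) (hx2 : x ≤ R + β) (hy1 : 0 ≤ y) (hy2 : y ≤ α) :
    Real.sqrt ((x * Real.cos (y * δ / (α * β)) - x) ^ 2 +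
        (x * Real.sin (y * δ / (α * β)) - y) ^ 2) ≤
      (α + δ) * δ / (2 * β) + δ + (α + δ) * δ ^ 2 / (6 * β ^ 2) := by
  obtain ⟨θ, hθ⟩ : ∃ θ, θ = y * δ / (α * β) := ⟨_, rfl⟩
  obtain ⟨t, ht⟩ : ∃ t, t = δ / β := ⟨_, rfl⟩
  rw [← hθ]
  have ht0 : 0 < t := by rw [ht]; positivity
  have hθ0 : 0 ≤ θ := by rw [hθ]; positivity
  have hθt : θ ≤ t := by
    rw [hθ, ht, div_le_div_iff₀ (by positivity) hβ]
    nlinarith [mul_le_mul_of_nonneg_right hy2 (mul_pos hδ hβ).le]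
  have hR0 : 0 < R := by rw [hR]; positivity
  have hx0 : 0 < x := lt_of_lt_of_le hR0 hx1
  have hRθ : R * θ = y := by rw [hR, hθ]; field_simp
  have hRt : R * t = α := by rw [hR, ht]; field_simp
  have hβt : β * t = δ := by rw [ht]; field_simp
  have hxt : x * t ≤ α + δ := by nlinarith
  have hrhs : (α + δ) * δ / (2 * β) + δ + (α + δ) * δ ^ 2 / (6 * β ^ 2)
      = (α + δ) * t / 2 + δ + (α + δ) * t ^ 2 / 6 := by
    rw [ht]; field_simp
  rw [hrhs]
  have hc1 := Real.one_sub_sq_div_two_le_cos (x := θ)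
  have hc2 := Real.cos_le_one θ
  have hs1 := Real.sin_le hθ0
  have hs2 := Real.sin_ge_sub_cube hθ0
  have h2 : x * θ ^ 2 ≤ (α + δ) * t := by
    calc x * θ ^ 2 ≤ x * t ^ 2 := by gcongr
      _ = (x * t) * t := by ring
      _ ≤ _ := by gcongr
  have h3 : x * θ ^ 3 ≤ (α + δ) * t ^ 2 := by
    calc x * θ ^ 3 ≤ x * t ^ 3 := by gcongr
      _ = (x * t) * t ^ 2 := by ring
      _ ≤ _ := by gcongr
  have hA : |x * Real.cos θ - x| ≤ (α + δ) * t / 2 := by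
    rw [abs_le]
    constructor
    · nlinarith [mul_le_mul_of_nonneg_left hc1 hx0.le]
    · have : 0 < (α + δ) * t := by positivity
      nlinarith [mul_le_mul_of_nonneg_left hc2 hx0.le]
  have h4 : 0 ≤ (x - R) * θ := mul_nonneg (by linarith) hθ0
  have h5 : (x - R) * θ ≤ δ := by
    rw [← hβt]
    exact mul_le_mul (by linarith) hθt hθ0 hβ.le
  have hB : |x * Real.sin θ - y| ≤ δ + (α + δ) * t ^ 2 / 6 := by
    have h6 := mul_le_mul_of_nonneg_left hs1 hx0.le
    have h7 := mul_le_mul_of_nonneg_left hs2 hx0.le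
    have : 0 < (α + δ) * t ^ 2 := by positivity
    rw [abs_le]
    constructor <;> nlinarith
  have hA' := abs_nonneg (x * Real.cos θ - x)
  have hB' := abs_nonneg (x * Real.sin θ - y)
  apply Real.sqrt_le_iff.2
  constructor
  · linarith
  · rw [← sq_abs (x * Real.cos θ - x), ← sq_abs (x * Real.sin θ - y)]
    have h8 : |x * Real.cos θ - x| + |x * Real.sin θ - y| ≤
      (α + δ) * t / 2 + δ + (α + δ) * t ^ 2 / 6 := by linarith
    have h9 := pow_le_pow_left₀ (add_nonneg hA' hB') h8 2
    nlinarith [mul_nonneg hA' hB']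
end
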